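/- arXiv:1707.05923 — 2 statements merged into one kernel-verified Lean document; each statement's English description precedes it below -/
import Mathlib

section
/- In the WMM axiomatic model, any execution satisfying the Inst-Order and Ld-Val axioms enforces per-location SC: for each memory address a, there exists a total order on all memory accesses (loads and stores) to a that is consistent with each processor's program order restricted to accesses of a, in which each load is placed after the store it reads from and before the next store to a in <_mo. -/
/-- Instruction operations of the WMM axiomatic model. -/
inductive IOp
  | ld (a : ℕ)
  | st (a : ℕ) (v : ℕ)
  | commit
  | reconcile
  | nm
  deriving DecidableEq

/-- An instruction: processor id, position in program order, operation. -/
structure Instr where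
  proc : ℕ
  idx : ℕ
  op : IOp
  deriving DecidableEq

/-- Per-processor program order. -/
def po (x y : Instr) : Prop := x.proc = y.proc ∧ x.idx < y.idx

/-- The WMM order-preserving table `order(X, Y)`. -/
def ordTable : IOp → IOp → Prop
  | .ld a, .ld b => a = b
  | .ld _, .st _ _ => True
  | .ld _, .reconcile => True
  | .ld _, .commit => True
  | .st a _, .st b _ => a = b
  | .st _ _, .commit => True
  | .st _ _, .ld _ => False
  | .st _ _, .reconcile => False
  | .reconcile, .ld _ => True
  | .reconcile, .st _ _ => True
  | .reconcile, .reconcile => True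
  | .reconcile, .commit => True
  | .commit, .ld _ => False
  | .commit, .st _ _ => True
  | .commit, .reconcile => True
  | .commit, .commit => True
  | _, _ => False

def isStoreTo (a : ℕ) (x : Instr) : Prop := ∃ v, x.op = IOp.st a v
def isLoadOf (a : ℕ) (x : Instr) : Prop := x.op = IOp.ld a

/-- A WMM axiomatic execution: a set of instructions `I`, a global memory
order `mo` (strict total on `I`), a reads-from relation `rf`, satisfying the
Inst-Order and Ld-Val axioms of WMM. -/
structure WMMAx where
  I : Set Instr
  mo : Instr → Instr → Prop
  rf : Instr → Instr → Prop
  mo_irrefl : ∀ x, ¬ mo x x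
  mo_trans : ∀ {x y z}, mo x y → mo y z → mo x z
  mo_total : ∀ x ∈ I, ∀ y ∈ I, x ≠ y → mo x y ∨ mo y x
  instOrder : ∀ x ∈ I, ∀ y ∈ I, po x y → ordTable x.op y.op → mo x y
  rf_mem : ∀ {S L}, rf S L → S ∈ I ∧ L ∈ I
  ldVal : ∀ {S L a}, rf S L → L.op = IOp.ld a →
    isStoreTo a S ∧ (mo S L ∨ po S L) ∧
    ∀ S' ∈ I, isStoreTo a S' → (mo S' L ∨ po S' L) → S' = S ∨ mo S' S

/-!
Ld-Val says that a load of `a` reads the `mo`-greatest store to `a` visible to it, so the load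
belongs right after that store. Accordingly every access `x` is assigned the lower set of stores
generated by those visible to `x`; since `mo` is total, the lower sets form a chain. For a store
it is the principal lower set of the store itself, for a load that of the store it reads from.
Accesses are ordered by these lower sets, with ties (a store and the loads that follow it) broken
by putting the store first and the loads in `mo`. Working with lower sets rather than with their
greatest elements also places the loads that have no `rf`-source, even when their visible stores
have no `mo`-maximum.
-/

theorem lowerClosure_eq_Iic_of_isGreatest {α : Type*} [Preorder α] {s : Set α} {m : α}
    (h : IsGreatest s m) : lowerClosure s = LowerSet.Iic m :=
  le_antisymm (lowerClosure_le.2 h.2) (LowerSet.Iic_le.2 (subset_lowerClosure h.1))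

theorem po_trans {x y z : Instr} (hxy : po x y) (hyz : po y z) : po x z :=
  ⟨hxy.1.trans hyz.1, hxy.2.trans hyz.2⟩

theorem not_isStoreTo_of_isLoadOf {a b : ℕ} {x : Instr} (hload : isLoadOf a x) :
    ¬ isStoreTo b x := by
  rintro ⟨v, hstore⟩
  exact IOp.noConfusion (hload.symm.trans hstore)

namespace WMMAx

variable {E : WMMAx} {a : ℕ} {x y S L : Instr}

/-- The memory accesses to address `a` in the execution. -/
def accessesTo (E : WMMAx) (a : ℕ) : Set Instr :=
  {x | x ∈ E.I ∧ (isLoadOf a x ∨ isStoreTo a x)}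

/-- The stores to address `a` in the execution. As a type, it is linearly ordered by `mo`. -/
def storesTo (E : WMMAx) (a : ℕ) : Set Instr :=
  {x | x ∈ E.I ∧ isStoreTo a x}

instance : IsStrictTotalOrder (E.storesTo a) (fun S T ↦ E.mo S T) where
  trichotomous S T hST hTS := by
    by_contra hne
    exact (E.mo_total S S.2.1 T T.2.1 (Subtype.coe_ne_coe.2 hne)).elim hST hTS
  irrefl S := E.mo_irrefl S
  trans _ _ _ := E.mo_trans

open Classical in
noncomputable instance : LinearOrder (E.storesTo a) :=
  linearOrderOfSTO (fun S T ↦ E.mo S T)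

/-- Visibility of a store `T` to an access `x`, as in the Ld-Val axiom. It is made reflexive so that
the same definition serves when `x` is a store. -/
def Visible (E : WMMAx) (T x : Instr) : Prop :=
  T = x ∨ E.mo T x ∨ po T x

/-- The position of `x` among the stores to `a`: the `mo`-lower set of stores generated by those
visible to `x`. -/
noncomputable def storesUpTo (E : WMMAx) (a : ℕ) (x : Instr) : LowerSet (E.storesTo a) :=
  lowerClosure {T | E.Visible T x}

/-- The order of accesses to `a` sharing the same `storesUpTo`: loads come after the store, and
are ordered by `mo` among themselves. -/
def tieBreak (E : WMMAx) (a : ℕ) (x y : Instr) : Prop :=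
  isLoadOf a y ∧ (isStoreTo a x ∨ E.mo x y)

/-- The per-location order: lexicographic in `storesUpTo`, then `tieBreak`. -/
def locationOrder (E : WMMAx) (a : ℕ) : Instr → Instr → Prop :=
  (fun x ↦ (E.storesUpTo a x, x)) ⁻¹'o Prod.Lex (· < ·) (E.tieBreak a)

instance : IsStrictOrder Instr (E.tieBreak a) where
  irrefl x := fun ⟨hload, h⟩ ↦ h.elim (not_isStoreTo_of_isLoadOf hload) (E.mo_irrefl x)
  trans _ y z := fun ⟨hy, hxy⟩ ⟨hz, hyz⟩ ↦
    have hmo : E.mo y z := hyz.resolve_left (not_isStoreTo_of_isLoadOf hy)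
    ⟨hz, hxy.imp_right (E.mo_trans · hmo)⟩

instance : IsStrictOrder Instr (E.locationOrder a) where
  toIrrefl := Order.Preimage.instIrrefl
  toIsTrans := Order.Preimage.instIsTrans

theorem locationOrder_iff : E.locationOrder a x y ↔ E.storesUpTo a x < E.storesUpTo a y ∨
    E.storesUpTo a x = E.storesUpTo a y ∧ E.tieBreak a x y :=
  Prod.lex_def

theorem locationOrder_of_le (hle : E.storesUpTo a x ≤ E.storesUpTo a y)
    (htie : E.tieBreak a x y) : E.locationOrder a x y :=
  locationOrder_iff.2 (hle.lt_or_eq.imp_right (⟨·, htie⟩))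

theorem mo_of_po (hx : x ∈ E.accessesTo a) (hy : y ∈ E.accessesTo a)
    (hkind : isLoadOf a x ∨ isStoreTo a y) (hpo : po x y) : E.mo x y := by
  refine E.instOrder x hx.1 y hy.1 hpo ?_
  rcases hx.2 with hxl | ⟨v, hxs⟩ <;> rcases hy.2 with hyl | ⟨w, hys⟩
  · rw [hxl, hyl]; rfl
  · rw [hxl, hys]; trivial
  · exact hkind.elim (fun h ↦ absurd ⟨v, hxs⟩ (not_isStoreTo_of_isLoadOf h))
      (fun h ↦ absurd h (not_isStoreTo_of_isLoadOf hyl))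
  · rw [hxs, hys]; rfl

theorem mem_accessesTo_of_mem_storesTo (hS : S ∈ E.storesTo a) : S ∈ E.accessesTo a :=
  ⟨hS.1, .inr hS.2⟩

theorem Visible.mo_of_po_store (hS : S ∈ E.storesTo a) (hx : x ∈ E.accessesTo a)
    (hy : y ∈ E.storesTo a) (hvis : E.Visible S x) (hpo : po x y) : E.mo S y := by
  have hy' := mem_accessesTo_of_mem_storesTo hy
  have hxy : E.mo x y := mo_of_po hx hy' (.inr hy.2) hpo
  rcases hvis with rfl | hmo | hpo'
  · exact hxy
  · exact E.mo_trans hmo hxy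
  · exact mo_of_po (mem_accessesTo_of_mem_storesTo hS) hy' (.inr hy.2) (po_trans hpo' hpo)

theorem Visible.trans_po_of_load (hx : x ∈ E.accessesTo a) (hy : y ∈ E.accessesTo a)
    (hload : isLoadOf a x) (hvis : E.Visible S x) (hpo : po x y) : E.Visible S y := by
  rcases hvis with rfl | hmo | hpo'
  · exact .inr (.inr hpo)
  · exact .inr (.inl (E.mo_trans hmo (mo_of_po hx hy (.inl hload) hpo)))
  · exact .inr (.inr (po_trans hpo' hpo))

theorem isGreatest_visible_store (S : E.storesTo a) :
    IsGreatest {T : E.storesTo a | E.Visible T S} S := by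
  refine ⟨.inl rfl, ?_⟩
  rintro T (heq | hmo | hpo)
  · exact (Subtype.ext heq).le
  · exact le_of_lt hmo
  · exact le_of_lt (mo_of_po (mem_accessesTo_of_mem_storesTo T.2)
      (mem_accessesTo_of_mem_storesTo S.2) (.inr S.2.2) hpo)

theorem storesUpTo_store (S : E.storesTo a) : E.storesUpTo a S = LowerSet.Iic S :=
  lowerClosure_eq_Iic_of_isGreatest (isGreatest_visible_store S)

theorem mem_storesTo_of_rf (hrf : E.rf S L) (hL : isLoadOf a L) : S ∈ E.storesTo a :=
  ⟨(E.rf_mem hrf).1, (E.ldVal hrf hL).1⟩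

theorem isGreatest_visible_of_rf (hrf : E.rf S L) (hL : isLoadOf a L) :
    IsGreatest {T : E.storesTo a | E.Visible T L} ⟨S, mem_storesTo_of_rf hrf hL⟩ := by
  obtain ⟨-, hvis, hmax⟩ := E.ldVal hrf hL
  refine ⟨.inr hvis, ?_⟩
  rintro T (heq | hvisT)
  · exact absurd (heq ▸ T.2.2) (not_isStoreTo_of_isLoadOf hL)
  · exact (hmax T T.2.1 T.2.2 hvisT).imp_left Subtype.ext

theorem storesUpTo_of_rf (hrf : E.rf S L) (hL : isLoadOf a L) :
    E.storesUpTo a L = E.storesUpTo a S :=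
  (lowerClosure_eq_Iic_of_isGreatest (isGreatest_visible_of_rf hrf hL)).trans
    (storesUpTo_store ⟨S, mem_storesTo_of_rf hrf hL⟩).symm

theorem storesUpTo_lt_of_mo {S T : E.storesTo a} (hmo : E.mo S T) :
    E.storesUpTo a S < E.storesUpTo a T := by
  rw [storesUpTo_store, storesUpTo_store]
  exact LowerSet.Iic_strictMono _ hmo

theorem storesUpTo_lt_store_of_po (hx : x ∈ E.accessesTo a) (S : E.storesTo a)
    (hpo : po x S) : E.storesUpTo a x < E.storesUpTo a S := by
  rw [storesUpTo_store, ← not_le, LowerSet.Iic_le]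
  rintro ⟨T, hvis, hle⟩
  exact hle.not_gt (hvis.mo_of_po_store T.2 hx S.2 hpo)

theorem storesUpTo_le_of_po (hx : x ∈ E.accessesTo a) (hy : y ∈ E.accessesTo a)
    (hpo : po x y) : E.storesUpTo a x ≤ E.storesUpTo a y := by
  rcases hx.2 with hload | hstore
  · exact lowerClosure_mono fun T hvis ↦ hvis.trans_po_of_load hx hy hload hpo
  · rw [storesUpTo_store ⟨x, hx.1, hstore⟩, LowerSet.Iic_le]
    exact subset_lowerClosure (.inr (.inr hpo))

theorem tieBreak_load_of_po (hx : x ∈ E.accessesTo a) (hy : y ∈ E.accessesTo a)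
    (hload : isLoadOf a y) (hpo : po x y) : E.tieBreak a x y :=
  ⟨hload, hx.2.symm.imp_right fun hxl ↦ mo_of_po hx hy (.inl hxl) hpo⟩

theorem locationOrder_of_po (hx : x ∈ E.accessesTo a) (hy : y ∈ E.accessesTo a)
    (hpo : po x y) : E.locationOrder a x y := by
  rcases hy.2 with hload | hstore
  · exact locationOrder_of_le (storesUpTo_le_of_po hx hy hpo) (tieBreak_load_of_po hx hy hload hpo)
  · exact locationOrder_iff.2 (.inl (storesUpTo_lt_store_of_po hx ⟨y, hy.1, hstore⟩ hpo))

theorem tieBreak_total_of_storesUpTo_eq (hx : x ∈ E.accessesTo a) (hy : y ∈ E.accessesTo a)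
    (hne : x ≠ y) (heq : E.storesUpTo a x = E.storesUpTo a y) :
    E.tieBreak a x y ∨ E.tieBreak a y x := by
  rcases hx.2 with hxl | hxs <;> rcases hy.2 with hyl | hys
  · exact (E.mo_total x hx.1 y hy.1 hne).imp (⟨hyl, .inr ·⟩) (⟨hxl, .inr ·⟩)
  · exact .inr ⟨hxl, .inl hys⟩
  · exact .inl ⟨hyl, .inl hxs⟩
  · rw [storesUpTo_store ⟨x, hx.1, hxs⟩, storesUpTo_store ⟨y, hy.1, hys⟩] at heq
    exact absurd (congrArg Subtype.val (LowerSet.Iic_injective heq)) hne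

theorem locationOrder_total (hx : x ∈ E.accessesTo a) (hy : y ∈ E.accessesTo a)
    (hne : x ≠ y) : E.locationOrder a x y ∨ E.locationOrder a y x := by
  rcases lt_trichotomy (E.storesUpTo a x) (E.storesUpTo a y) with hlt | heq | hgt
  · exact .inl (locationOrder_iff.2 (.inl hlt))
  · exact (tieBreak_total_of_storesUpTo_eq hx hy hne heq).imp
      (locationOrder_of_le heq.le) (locationOrder_of_le heq.ge)
  · exact .inr (locationOrder_iff.2 (.inl hgt))

theorem locationOrder_of_rf (hrf : E.rf S L) (hL : isLoadOf a L) : E.locationOrder a S L :=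
  locationOrder_of_le (storesUpTo_of_rf hrf hL).ge ⟨hL, .inl (mem_storesTo_of_rf hrf hL).2⟩

theorem locationOrder_of_rf_of_mo {T : Instr} (hrf : E.rf S L) (hL : isLoadOf a L)
    (hT : T ∈ E.storesTo a) (hmo : E.mo S T) : E.locationOrder a L T := by
  refine locationOrder_iff.2 (.inl ?_)
  rw [storesUpTo_of_rf hrf hL]
  exact storesUpTo_lt_of_mo (S := ⟨S, mem_storesTo_of_rf hrf hL⟩) (T := ⟨T, hT⟩) hmo

end WMMAx

/-- WMM enforces per-location SC: for each address `a` there is a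
strict total order `R` on all memory accesses to `a` that is consistent with
each processor's program order restricted to accesses of `a`, in which each
load is placed after the store it reads from and before every `mo`-later store
to `a`. -/
theorem wmm_per_location_SC (E : WMMAx) :
    ∀ a : ℕ, ∃ R : Instr → Instr → Prop,
      (∀ x, ¬ R x x) ∧
      (∀ x y z, R x y → R y z → R x z) ∧
      (∀ x ∈ E.I, ∀ y ∈ E.I, (isLoadOf a x ∨ isStoreTo a x) →
        (isLoadOf a y ∨ isStoreTo a y) → x ≠ y → R x y ∨ R y x) ∧
      (∀ x ∈ E.I, ∀ y ∈ E.I, (isLoadOf a x ∨ isStoreTo a x) →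
        (isLoadOf a y ∨ isStoreTo a y) → po x y → R x y) ∧
      (∀ S L, E.rf S L → isLoadOf a L →
        R S L ∧ ∀ S' ∈ E.I, isStoreTo a S' → E.mo S S' → R L S') := by
  intro a
  refine ⟨E.locationOrder a, irrefl, fun _ _ _ ↦ _root_.trans, ?total, ?programOrder, ?readsFrom⟩
  case total =>
    exact fun x hx y hy hxa hya ↦ WMMAx.locationOrder_total ⟨hx, hxa⟩ ⟨hy, hya⟩
  case programOrder =>
    exact fun x hx y hy hxa hya ↦ WMMAx.locationOrder_of_po ⟨hx, hxa⟩ ⟨hy, hya⟩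
  case readsFrom =>
    exact fun S L hrf hL ↦ ⟨WMMAx.locationOrder_of_rf hrf hL,
      fun T hT hstore ↦ WMMAx.locationOrder_of_rf_of_mo hrf hL ⟨hT, hstore⟩⟩
end

section
/- Soundness of the WMM I²E model with respect to the WMM axiomatic model: for every finite execution of the WMM I²E abstract machine that ends with all store buffers empty, there exist relations <_po, <_mo, and rf over the executed instructions—where <_po is the per-processor execution order, <_mo is constructed by appending loads, fences, and dequeued stores as in the instrumented machine (with a load that reads a stale value inserted immediately before the store that overwrote its source), and rf maps each load to the store whose value it returned—such that the Inst-Order and Ld-Val axioms of WMM hold and every load returns the same value in both models. -/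
/-- A WMM axiomatic execution: a set of instructions `I`, a global memory
order `mo` (strict total on `I`), a reads-from relation `rf`, satisfying the
Inst-Order and Ld-Val axioms of WMM. -/
abbrev Buf := List (ℕ × ℕ)

def hasAddr (l : Buf) (a : ℕ) : Prop := a ∈ l.map Prod.fst

instance (l : Buf) (a : ℕ) : Decidable (hasAddr l a) :=
  inferInstanceAs (Decidable (a ∈ l.map Prod.fst))

def remAddr (l : Buf) (a : ℕ) : Buf := l.filter (fun e => e.1 ≠ a)

/-- State of the WMM I²E machine running a program `prog` (processor × index →
operation): atomic memory, store buffers and invalidation buffers (head =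
newest), per-processor count of executed instructions, and recorded load
results. -/
structure PSt where
  mem : ℕ → ℕ
  sb : ℕ → Buf
  ib : ℕ → Buf
  cnt : ℕ → ℕ
  res : ℕ → ℕ → ℕ

def setRes (res : ℕ → ℕ → ℕ) (i k v : ℕ) : ℕ → ℕ → ℕ :=
  fun j l => if j = i ∧ l = k then v else res j l

/-- Operations of the WMM I²E abstract machine executing `prog`. -/
inductive PStep (prog : ℕ → ℕ → IOp) : PSt → PSt → Prop
  | nm (s : PSt) (i : ℕ) (h : prog i (s.cnt i) = IOp.nm) :
      PStep prog s { s with cnt := Function.update s.cnt i (s.cnt i + 1) }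
  | store (s : PSt) (i a v : ℕ) (h : prog i (s.cnt i) = IOp.st a v) :
      PStep prog s
        { s with sb := Function.update s.sb i ((a, v) :: s.sb i),
                 ib := Function.update s.ib i (remAddr (s.ib i) a),
                 cnt := Function.update s.cnt i (s.cnt i + 1) }
  | commit (s : PSt) (i : ℕ) (h : prog i (s.cnt i) = IOp.commit)
      (he : s.sb i = []) :
      PStep prog s { s with cnt := Function.update s.cnt i (s.cnt i + 1) }
  | reconcile (s : PSt) (i : ℕ) (h : prog i (s.cnt i) = IOp.reconcile) :
      PStep prog s
        { s with ib := Function.update s.ib i [],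
                 cnt := Function.update s.cnt i (s.cnt i + 1) }
  | ldSb (s : PSt) (i a v : ℕ) (l1 l2 : Buf) (h : prog i (s.cnt i) = IOp.ld a)
      (hsb : s.sb i = l1 ++ (a, v) :: l2) (hy : ¬ hasAddr l1 a) :
      PStep prog s
        { s with res := setRes s.res i (s.cnt i) v,
                 cnt := Function.update s.cnt i (s.cnt i + 1) }
  | ldMem (s : PSt) (i a : ℕ) (h : prog i (s.cnt i) = IOp.ld a)
      (hn : ¬ hasAddr (s.sb i) a) :
      PStep prog s
        { s with res := setRes s.res i (s.cnt i) (s.mem a),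
                 ib := Function.update s.ib i (remAddr (s.ib i) a),
                 cnt := Function.update s.cnt i (s.cnt i + 1) }
  | ldIb (s : PSt) (i a v : ℕ) (l1 l2 : Buf) (h : prog i (s.cnt i) = IOp.ld a)
      (hn : ¬ hasAddr (s.sb i) a) (hib : s.ib i = l1 ++ (a, v) :: l2) :
      PStep prog s
        { s with res := setRes s.res i (s.cnt i) v,
                 ib := Function.update s.ib i (l1 ++ (a, v) :: remAddr l2 a),
                 cnt := Function.update s.cnt i (s.cnt i + 1) }
  | deqSb (s : PSt) (i a v : ℕ) (l1 l2 : Buf)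
      (hsb : s.sb i = l1 ++ (a, v) :: l2) (hold : ¬ hasAddr l2 a) :
      PStep prog s
        { s with mem := Function.update s.mem a v,
                 sb := Function.update s.sb i (l1 ++ l2),
                 ib := fun j => if j = i ∨ hasAddr (s.sb j) a then s.ib j
                                else (a, s.mem a) :: s.ib j }

def PInit (m0 : ℕ → ℕ) : PSt :=
  { mem := m0, sb := fun _ => [], ib := fun _ => [],
    cnt := fun _ => 0, res := fun _ _ => 0 }

/-- The initialization store instruction for address `a` (on the reserved
processor 0). -/
def initInstr (m0 : ℕ → ℕ) (a : ℕ) : Instr := ⟨0, a, IOp.st a (m0 a)⟩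

/-!
Every executed instruction receives a time in `[0, ∞]`, and memory order is the order of the times.
Initial stores sit at time `0`, and a store waits at time `∞` until it is dequeued, when it moves to
a finite time above all the finite times used so far. A load from memory and a fence are placed at
such a time as well, while a load of a stale value is placed just before the store that overwrote
it. There is always room, since only finitely many times are in use.

With the buffered stores at the end of memory order, Inst-Order and Ld-Val hold after every step of
the machine, whether or not the store buffers are empty. A load finds its source as the latest store
before the point where the load is placed (memory and stale reads), or as the latest of its own
processor's buffered stores.
-/

open scoped ENNReal

theorem not_po_self (x : Instr) : ¬ po x x := fun h => lt_irrefl _ h.2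

theorem ne_of_po {x y : Instr} (h : po x y) : x ≠ y := by
  rintro rfl
  exact not_po_self x h

theorem ordTable_of_isStoreTo {a : ℕ} {x y : Instr} (hx : isStoreTo a x) (hy : isStoreTo a y) :
    ordTable x.op y.op := by
  obtain ⟨v, hv⟩ := hx
  obtain ⟨w, hw⟩ := hy
  rw [hv, hw]
  rfl

theorem not_isStoreTo_of_load {a : ℕ} {x : Instr} (hx : x.op = IOp.ld a) (b : ℕ) :
    ¬ isStoreTo b x := by
  simp [isStoreTo, hx]

theorem exists_lt_forall_lt_of_finite {α : Type*} [LinearOrder α] [OrderBot α] [DenselyOrdered α]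
    {F : Set α} (hF : F.Finite) {b : α} (hb : ⊥ < b) : ∃ c < b, ∀ f ∈ F, f < b → f < c := by
  obtain ⟨m, hm, hmax⟩ := Set.exists_max_image (insert ⊥ {f ∈ F | f < b}) id
    ((hF.subset (Set.sep_subset _ _)).insert ⊥) (Set.insert_nonempty _ _)
  have hmb : m < b := by
    rcases hm with rfl | hm
    exacts [hb, hm.2]
  obtain ⟨c, hmc, hcb⟩ := exists_between hmb
  exact ⟨c, hcb, fun f hf hfb => (hmax f (Or.inr ⟨hf, hfb⟩)).trans_lt hmc⟩

theorem map_fst_eq_append_cons_iff {α β : Type*} {q : List (α × β)} {l₁ l₂ : List α} {c : α} :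
    q.map Prod.fst = l₁ ++ c :: l₂ ↔ ∃ q₁ d q₂, q = q₁ ++ (c, d) :: q₂ ∧
      q₁.map Prod.fst = l₁ ∧ q₂.map Prod.fst = l₂ := by
  constructor
  · intro h
    obtain ⟨q₁, q', rfl, rfl, h'⟩ := List.map_eq_append_iff.1 h
    obtain ⟨⟨_, d⟩, q₂, rfl, rfl, rfl⟩ := List.map_eq_cons_iff.1 h'
    exact ⟨q₁, d, q₂, rfl, rfl, rfl⟩
  · rintro ⟨q₁, d, q₂, rfl, rfl, rfl⟩
    simp only [List.map_append, List.map_cons]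

/-- A memory order under construction: the instructions executed so far and their times. The time
of a store that still waits in a store buffer is `⊤`; times outside `instrs` carry no meaning. -/
structure Timeline where
  instrs : Set Instr
  time : Instr → ℝ≥0∞

namespace Timeline

/-- Time with ties broken by processor and index, so that distinct instructions never share a
position. Ties occur only among initial stores and among buffered stores. -/
def position (T : Timeline) (x : Instr) : ℝ≥0∞ ×ₗ ℕ ×ₗ ℕ :=
  toLex (T.time x, toLex (x.proc, x.idx))

/-- The global memory order `<_mo` determined by a timeline. -/
def mo (T : Timeline) (x y : Instr) : Prop := T.position x < T.position y

/-- The condition `S <_mo L ∨ S <_po L` of the axiom Ld-Val. -/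
def Visible (T : Timeline) (S L : Instr) : Prop := T.mo S L ∨ po S L

/-- The axiom Inst-Order. -/
def InstOrder (T : Timeline) : Prop :=
  ∀ x ∈ T.instrs, ∀ y ∈ T.instrs, po x y → ordTable x.op y.op → T.mo x y

/-- The axiom Ld-Val for a load `L` of address `a` that returns `v` from the store `S`. -/
structure IsReadSource (T : Timeline) (a v : ℕ) (S L : Instr) : Prop where
  mem : S ∈ T.instrs
  op_eq : S.op = IOp.st a v
  visible : T.Visible S L
  maximal : ∀ S' ∈ T.instrs, isStoreTo a S' → T.Visible S' L → S' = S ∨ T.mo S' S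

/-- `S` writes `v` and is the last store to `a` at a time before `b`. For `b = ⊤` it is the store
whose value is in memory; for `b` the time of an overwriting store it is the source of a stale
value. -/
structure IsLatestStoreBefore (T : Timeline) (b : ℝ≥0∞) (a v : ℕ) (S : Instr) : Prop where
  mem : S ∈ T.instrs
  op_eq : S.op = IOp.st a v
  time_lt : T.time S < b
  latest : ∀ S' ∈ T.instrs, isStoreTo a S' → T.time S' < b → S' = S ∨ T.mo S' S

/-- Adds the instruction `x` at time `t`, or moves it there if it is already present. -/
def place (T : Timeline) (x : Instr) (t : ℝ≥0∞) : Timeline where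
  instrs := insert x T.instrs
  time := Function.update T.time x t

/-- No executed instruction has a time in `[t, b)`. -/
structure IsJustBefore (T : Timeline) (t b : ℝ≥0∞) : Prop where
  lt : t < b
  time_lt : ∀ y ∈ T.instrs, T.time y < b → T.time y < t

/-- `x` has no place in memory order yet: it is either not executed or still buffered. -/
def Unperformed (T : Timeline) (x : Instr) : Prop := x ∈ T.instrs → T.time x = ⊤

/-- `x` may be executed next: it is new and no executed instruction follows it in program order. -/
structure IsNext (T : Timeline) (x : Instr) : Prop where
  notMem : x ∉ T.instrs
  not_po : ∀ y ∈ T.instrs, ¬ po x y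

/-- `x` is a buffered instruction that does not have to wait for any other buffered one. -/
structure IsDequeuable (T : Timeline) (x : Instr) : Prop where
  mem : x ∈ T.instrs
  time_eq : T.time x = ⊤
  time_lt_of_po : ∀ y ∈ T.instrs, po y x → ordTable y.op x.op → T.time y < ⊤

variable {T : Timeline} {x y z S L : Instr} {a v : ℕ} {t b : ℝ≥0∞}

theorem mo_iff : T.mo x y ↔ T.time x < T.time y ∨
    T.time x = T.time y ∧ (x.proc < y.proc ∨ x.proc = y.proc ∧ x.idx < y.idx) := by
  simp only [mo, position, Prod.Lex.toLex_lt_toLex]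

theorem mo_irrefl (T : Timeline) (x : Instr) : ¬ T.mo x x := lt_irrefl (T.position x)

theorem mo_trans (hxy : T.mo x y) (hyz : T.mo y z) : T.mo x z := lt_trans hxy hyz

theorem mo_or_mo (h : x.proc = y.proc → x.idx ≠ y.idx) : T.mo x y ∨ T.mo y x := by
  refine lt_or_gt_of_ne fun heq => ?_
  simp only [position, toLex_inj, Prod.mk.injEq] at heq
  exact h heq.2.1 heq.2.2

theorem mo_of_time_lt (h : T.time x < T.time y) : T.mo x y := mo_iff.2 (Or.inl h)

theorem mo_of_po (hpo : po x y) (h : T.time x ≤ T.time y) : T.mo x y :=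
  mo_iff.2 (h.lt_or_eq.imp_right fun heq => ⟨heq, Or.inr hpo⟩)

theorem time_le_of_mo (h : T.mo x y) : T.time x ≤ T.time y :=
  (mo_iff.1 h).elim le_of_lt fun h => h.1.le

theorem po_of_mo (h : T.mo x y) (hproc : x.proc = y.proc) (htime : T.time y ≤ T.time x) :
    po x y := by
  rcases mo_iff.1 h with hlt | ⟨-, hlt | hidx⟩
  · exact absurd htime hlt.not_ge
  · exact absurd hproc hlt.ne
  · exact hidx

@[simp]
theorem time_place_self : (T.place x t).time x = t := Function.update_self ..

@[simp]
theorem time_place_of_ne (h : y ≠ x) : (T.place x t).time y = T.time y := Function.update_of_ne h ..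

theorem mem_of_mem_place_of_ne (hy : y ∈ (T.place x t).instrs) (hne : y ≠ x) : y ∈ T.instrs :=
  hy.resolve_left hne

theorem mem_place_of_mem (h : y ∈ T.instrs) : y ∈ (T.place x t).instrs := Or.inr h

theorem mo_place_iff (hy : y ≠ x) (hz : z ≠ x) : (T.place x t).mo y z ↔ T.mo y z := by
  rw [mo_iff, mo_iff, time_place_of_ne hy, time_place_of_ne hz]

theorem visible_place_iff (hy : y ≠ x) (hz : z ≠ x) :
    (T.place x t).Visible y z ↔ T.Visible y z :=
  or_congr_left (mo_place_iff hy hz)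

theorem finite_times_place (h : (T.time '' T.instrs).Finite) (x : Instr) (t : ℝ≥0∞) :
    ((T.place x t).time '' (T.place x t).instrs).Finite := by
  refine (h.insert t).subset ?_
  rintro _ ⟨y, hy, rfl⟩
  by_cases hyx : y = x
  · subst hyx
    exact Or.inl time_place_self
  · exact Or.inr ⟨y, mem_of_mem_place_of_ne hy hyx, (time_place_of_ne hyx).symm⟩

theorem exists_isJustBefore (h : (T.time '' T.instrs).Finite) (hb : 0 < b) :
    ∃ t, T.IsJustBefore t b := by
  obtain ⟨t, htb, ht⟩ := exists_lt_forall_lt_of_finite h hb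
  exact ⟨t, htb, fun y hy => ht _ ⟨y, hy, rfl⟩⟩

theorem IsJustBefore.time_place_lt (ht : T.IsJustBefore t b) (hy : y ∈ (T.place x t).instrs)
    (hyx : y ≠ x) (hyb : (T.place x t).time y < b) : (T.place x t).time y < t := by
  rw [time_place_of_ne hyx] at hyb ⊢
  exact ht.time_lt y (mem_of_mem_place_of_ne hy hyx) hyb

theorem Unperformed.ne (hx : T.Unperformed x) (hy : y ∈ T.instrs) (hlt : T.time y < ⊤) :
    y ≠ x := by
  rintro rfl
  exact hlt.ne (hx hy)

theorem IsNext.unperformed (hx : T.IsNext x) : T.Unperformed x := fun h => absurd h hx.notMem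

theorem IsNext.ne (hx : T.IsNext x) (hy : y ∈ T.instrs) : y ≠ x := ne_of_mem_of_not_mem hy hx.notMem

theorem IsDequeuable.unperformed (hx : T.IsDequeuable x) : T.Unperformed x := fun _ => hx.time_eq

/-! ### Preservation of the axioms -/

theorem InstOrder.place (h : T.InstOrder)
    (hbefore : ∀ y ∈ T.instrs, po y x → ordTable y.op x.op → T.time y ≤ t)
    (hafter : ∀ y ∈ T.instrs, po x y → ordTable x.op y.op → t ≤ T.time y) :
    (T.place x t).InstOrder := by
  intro y hy z hz hpo hord
  by_cases hyx : y = x <;> by_cases hzx : z = x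
  · exact absurd (hyx.trans hzx.symm) (ne_of_po hpo)
  · subst hyx
    refine mo_of_po hpo ?_
    rw [time_place_self, time_place_of_ne hzx]
    exact hafter z (mem_of_mem_place_of_ne hz hzx) hpo hord
  · subst hzx
    refine mo_of_po hpo ?_
    rw [time_place_self, time_place_of_ne hyx]
    exact hbefore y (mem_of_mem_place_of_ne hy hyx) hpo hord
  · rw [mo_place_iff hyx hzx]
    exact h y (mem_of_mem_place_of_ne hy hyx) z (mem_of_mem_place_of_ne hz hzx) hpo hord

theorem InstOrder.place_next (h : T.InstOrder) (hx : T.IsNext x)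
    (hbefore : ∀ y ∈ T.instrs, po y x → ordTable y.op x.op → T.time y ≤ t) :
    (T.place x t).InstOrder :=
  h.place hbefore fun y hy hpo => absurd hpo (hx.not_po y hy)

theorem InstOrder.place_dequeued (h : T.InstOrder) (hx : T.IsDequeuable x)
    (ht : T.IsJustBefore t ⊤) : (T.place x t).InstOrder := by
  refine h.place (fun y hy hpo hord => ?_) fun y hy hpo hord => ?_
  · exact (ht.time_lt y hy (hx.time_lt_of_po y hy hpo hord)).le
  · calc t ≤ ⊤ := le_top
      _ = T.time x := hx.time_eq.symm
      _ ≤ T.time y := time_le_of_mo (h x hx.mem y hy hpo hord)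

theorem IsLatestStoreBefore.ne (h : T.IsLatestStoreBefore b a v S) (hx : T.Unperformed x) :
    S ≠ x :=
  hx.ne h.mem (h.time_lt.trans_le le_top)

theorem IsLatestStoreBefore.place (h : T.IsLatestStoreBefore b a v S) (hx : T.Unperformed x)
    (hb : isStoreTo a x → b ≤ t) : (T.place x t).IsLatestStoreBefore b a v S where
  mem := mem_place_of_mem h.mem
  op_eq := h.op_eq
  time_lt := by
    rw [time_place_of_ne (h.ne hx)]
    exact h.time_lt
  latest S' hS' hst hlt := by
    by_cases hS'x : S' = x
    · subst hS'x
      rw [time_place_self] at hlt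
      exact absurd (hb hst) hlt.not_ge
    · rw [mo_place_iff hS'x (h.ne hx)]
      rw [time_place_of_ne hS'x] at hlt
      exact h.latest S' (mem_of_mem_place_of_ne hS' hS'x) hst hlt

theorem IsJustBefore.isLatestStoreBefore_place (ht : T.IsJustBefore t b)
    (hx : x.op = IOp.st a v) : (T.place x t).IsLatestStoreBefore b a v x where
  mem := Or.inl rfl
  op_eq := hx
  time_lt := time_place_self.trans_lt ht.lt
  latest S' hS' _ hlt := by
    refine or_iff_not_imp_left.2 fun hS'x => mo_of_time_lt ?_
    rw [time_place_self]
    exact ht.time_place_lt hS' hS'x hlt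

theorem IsLatestStoreBefore.place_overwriting (h : T.IsLatestStoreBefore b a v S)
    (hx : T.Unperformed x) (ht : T.IsJustBefore t b) :
    (T.place x t).IsLatestStoreBefore t a v S where
  mem := mem_place_of_mem h.mem
  op_eq := h.op_eq
  time_lt := by
    rw [time_place_of_ne (h.ne hx)]
    exact ht.time_lt S h.mem h.time_lt
  latest S' hS' hst hlt := by
    have hS'x : S' ≠ x := by
      rintro rfl
      exact hlt.ne time_place_self
    rw [mo_place_iff hS'x (h.ne hx)]
    rw [time_place_of_ne hS'x] at hlt
    exact h.latest S' (mem_of_mem_place_of_ne hS' hS'x) hst (hlt.trans ht.lt)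

theorem IsReadSource.place_next (h : T.IsReadSource a v S L) (hL : L ∈ T.instrs)
    (hx : T.IsNext x) (ht : isStoreTo a x → T.time L < t) :
    (T.place x t).IsReadSource a v S L where
  mem := mem_place_of_mem h.mem
  op_eq := h.op_eq
  visible := (visible_place_iff (hx.ne h.mem) (hx.ne hL)).2 h.visible
  maximal S' hS' hst hvis := by
    by_cases hS'x : S' = x
    · subst hS'x
      refine (hvis.elim (fun hmo => ?_) (hx.not_po L hL)).elim
      have hle := time_le_of_mo hmo
      rw [time_place_self, time_place_of_ne (hx.ne hL)] at hle
      exact (ht hst).not_ge hle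
    · rw [visible_place_iff hS'x (hx.ne hL)] at hvis
      rw [mo_place_iff hS'x (hx.ne h.mem)]
      exact h.maximal S' (mem_of_mem_place_of_ne hS' hS'x) hst hvis

theorem IsDequeuable.visible_place_iff (hx : T.IsDequeuable x) (ht : T.IsJustBefore t ⊤)
    (hL : L ∈ T.instrs) (hLtop : T.time L < ⊤) :
    (T.place x t).Visible y L ↔ T.Visible y L := by
  have hLx : L ≠ x := hx.unperformed.ne hL hLtop
  by_cases hyx : y = x
  · subst hyx
    have hnew : ¬ (T.place y t).mo y L := fun hmo => by
      have hle := time_le_of_mo hmo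
      rw [time_place_self, time_place_of_ne hLx] at hle
      exact (ht.time_lt L hL hLtop).not_ge hle
    have hold : ¬ T.mo y L := fun hmo =>
      (hx.time_eq.symm.trans_le (time_le_of_mo hmo)).not_gt hLtop
    simp only [Visible, hnew, hold]
  · exact Timeline.visible_place_iff hyx hLx

theorem IsDequeuable.mo_place (hx : T.IsDequeuable x) (ht : T.IsJustBefore t ⊤)
    (hz : z ≠ x) (h : T.mo y z) : (T.place x t).mo y z := by
  by_cases hyx : y = x
  · subst hyx
    apply mo_of_time_lt
    rw [time_place_self, time_place_of_ne hz]
    exact ht.lt.trans_le (hx.time_eq.symm.trans_le (time_le_of_mo h))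
  · exact (mo_place_iff hyx hz).2 h

theorem IsReadSource.time_lt_top_of_dequeuable (h : T.IsReadSource a v x L) (hL : T.time L < ⊤)
    (hx : T.IsDequeuable x) (hy : y ∈ T.instrs) (hst : isStoreTo a y)
    (hvis : T.Visible y L) (hmo : T.mo y x) : T.time y < ⊤ := by
  by_contra hytop
  have po_of_visible : ∀ z, T.Visible z L → ¬ T.time z < ⊤ → po z L := fun z hz hztop =>
    hz.resolve_left fun hmo => hztop ((time_le_of_mo hmo).trans_lt hL)
  have hyL := po_of_visible y hvis hytop
  have hxL := po_of_visible x h.visible hx.time_eq.not_lt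
  have hyx : po y x := po_of_mo hmo (hyL.1.trans hxL.1.symm)
    (hx.time_eq.trans_le (not_lt_top_iff.1 hytop).ge)
  exact hytop (hx.time_lt_of_po y hy hyx (ordTable_of_isStoreTo hst ⟨v, h.op_eq⟩))

theorem IsReadSource.place_dequeued (h : T.IsReadSource a v S L) (hL : L ∈ T.instrs)
    (hLtop : T.time L < ⊤) (hx : T.IsDequeuable x) (ht : T.IsJustBefore t ⊤) :
    (T.place x t).IsReadSource a v S L where
  mem := mem_place_of_mem h.mem
  op_eq := h.op_eq
  visible := (hx.visible_place_iff ht hL hLtop).2 h.visible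
  maximal S' hS' hst hvis := by
    rw [hx.visible_place_iff ht hL hLtop] at hvis
    have hS'mem : S' ∈ T.instrs := by
      rcases hS' with rfl | hS'
      exacts [hx.mem, hS']
    refine (h.maximal S' hS'mem hst hvis).imp_right fun hmo => ?_
    by_cases hSx : S = x
    · subst hSx
      have hS'top := h.time_lt_top_of_dequeuable hLtop hx hS'mem hst hvis hmo
      apply mo_of_time_lt
      rw [time_place_self, time_place_of_ne (hx.unperformed.ne hS'mem hS'top)]
      exact ht.time_lt S' hS'mem hS'top
    · exact hx.mo_place ht hSx hmo

theorem IsLatestStoreBefore.isReadSource_place (h : T.IsLatestStoreBefore b a v S)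
    (hx : T.IsNext x) (hnst : ¬ isStoreTo a x) (ht : T.IsJustBefore t b)
    (hpo : ∀ S' ∈ T.instrs, isStoreTo a S' → po S' x → T.time S' < b) :
    (T.place x t).IsReadSource a v S x where
  mem := mem_place_of_mem h.mem
  op_eq := h.op_eq
  visible := by
    refine Or.inl (mo_of_time_lt ?_)
    rw [time_place_self, time_place_of_ne (hx.ne h.mem)]
    exact ht.time_lt S h.mem h.time_lt
  maximal S' hS' hst hvis := by
    have hS'x : S' ≠ x := by
      rintro rfl
      exact hnst hst
    have hS'mem := mem_of_mem_place_of_ne hS' hS'x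
    rw [mo_place_iff hS'x (hx.ne h.mem)]
    refine h.latest S' hS'mem hst (hvis.elim (fun hmo => ?_) (hpo S' hS'mem hst))
    have hle := time_le_of_mo hmo
    rw [time_place_self, time_place_of_ne hS'x] at hle
    exact hle.trans_lt ht.lt

theorem isReadSource_place_of_buffered (hx : T.IsNext x) (hnst : ¬ isStoreTo a x) (ht : t < ⊤)
    (hS : S ∈ T.instrs) (hop : S.op = IOp.st a v) (hStop : T.time S = ⊤) (hpo : po S x)
    (hnewest : ∀ S' ∈ T.instrs, isStoreTo a S' → po S' x → T.time S' = ⊤ → S' = S ∨ po S' S) :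
    (T.place x t).IsReadSource a v S x where
  mem := mem_place_of_mem hS
  op_eq := hop
  visible := Or.inr hpo
  maximal S' hS' hst hvis := by
    have hS'x : S' ≠ x := by
      rintro rfl
      exact hnst hst
    have hS'mem := mem_of_mem_place_of_ne hS' hS'x
    rw [mo_place_iff hS'x (hx.ne hS)]
    by_cases hS'top : T.time S' = ⊤
    · have hS'po : po S' x := hvis.resolve_left fun hmo => by
        have hle := time_le_of_mo hmo
        rw [time_place_self, time_place_of_ne hS'x, hS'top] at hle
        exact ht.not_ge hle
      refine (hnewest S' hS'mem hst hS'po hS'top).imp_right fun hpo => mo_of_po hpo ?_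
      exact hS'top.trans_le hStop.ge
    · exact Or.inr (mo_of_time_lt ((Ne.lt_top hS'top).trans_eq hStop.symm))

/-! ### Store buffers and invalidation buffers -/

/-- `x` is a store of processor `i` that has been executed but not dequeued. -/
structure Pending (T : Timeline) (i : ℕ) (x : Instr) : Prop where
  mem : x ∈ T.instrs
  proc_eq : x.proc = i
  time_eq : T.time x = ⊤

/-- `q` pairs the entries of the store buffer of processor `i` with the stores that issued them. -/
structure IsPendingBuffer (T : Timeline) (i : ℕ) (q : List ((ℕ × ℕ) × Instr)) : Prop where
  op_eq : ∀ p ∈ q, p.2.op = IOp.st p.1.1 p.1.2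
  mem_iff : ∀ x, x ∈ q.map Prod.snd ↔ T.Pending i x
  newest_first : q.Pairwise fun p r => po r.2 p.2

/-- The store buffer `l` of processor `i` consists of the pending stores of `i`. -/
def HoldsPending (T : Timeline) (i : ℕ) (l : Buf) : Prop :=
  ∃ q, T.IsPendingBuffer i q ∧ q.map Prod.fst = l

/-- Executing `x` removes the stale values for `a` from the local invalidation buffer, at least
those older than the value that `x` returns. -/
def Invalidates (a : ℕ) (x : Instr) : Prop := isStoreTo a x ∨ ordTable x.op (IOp.ld a)

/-- The entry `e` of the invalidation buffer of processor `i` was overwritten by the store `O`, and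
a load of `e` by `i` may still be placed just before `O`. -/
structure IsStale (T : Timeline) (i : ℕ) (e : ℕ × ℕ) (O : Instr) : Prop where
  mem : O ∈ T.instrs
  time_lt_top : T.time O < ⊤
  exists_source : ∃ S, T.IsLatestStoreBefore (T.time O) e.1 e.2 S
  time_lt : ∀ x ∈ T.instrs, x.proc = i → Invalidates e.1 x → T.time x < T.time O

/-- `q` pairs the entries of the invalidation buffer of processor `i` with the stores that overwrote
them. -/
structure IsStaleBuffer (T : Timeline) (i : ℕ) (q : List ((ℕ × ℕ) × Instr)) : Prop where
  isStale : ∀ p ∈ q, T.IsStale i p.1 p.2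
  newest_first : q.Pairwise fun p r => T.time r.2 < T.time p.2

/-- The invalidation buffer `l` of processor `i` consists of stale values. -/
def HoldsStale (T : Timeline) (i : ℕ) (l : Buf) : Prop :=
  ∃ q, T.IsStaleBuffer i q ∧ q.map Prod.fst = l

variable {i : ℕ} {q : List ((ℕ × ℕ) × Instr)} {e : ℕ × ℕ} {l l₁ l₂ : Buf} {O : Instr}

theorem invalidates_load_iff {c : ℕ} (hx : x.op = IOp.ld a) : Invalidates c x ↔ a = c := by
  simp [Invalidates, isStoreTo, hx, ordTable]

theorem hasAddr_of_mem (h : ((a, v), x) ∈ q) : hasAddr (q.map Prod.fst) a :=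
  List.mem_map.2 ⟨(a, v), List.mem_map.2 ⟨_, h, rfl⟩, rfl⟩

theorem IsPendingBuffer.exists_mem (h : T.IsPendingBuffer i q) (hx : T.Pending i x) :
    ∃ e, (e, x) ∈ q ∧ x.op = IOp.st e.1 e.2 := by
  obtain ⟨⟨e, _⟩, hmem, rfl⟩ := List.mem_map.1 ((h.mem_iff x).2 hx)
  exact ⟨e, hmem, h.op_eq _ hmem⟩

theorem IsPendingBuffer.pending (h : T.IsPendingBuffer i q) (hx : (e, x) ∈ q) : T.Pending i x :=
  (h.mem_iff x).1 (List.mem_map_of_mem hx)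

theorem IsPendingBuffer.exists_mem_of_isStoreTo (h : T.IsPendingBuffer i q) (hx : T.Pending i x)
    (hst : isStoreTo a x) : ∃ v, ((a, v), x) ∈ q := by
  obtain ⟨⟨b, v⟩, hmem, hop⟩ := h.exists_mem hx
  obtain ⟨w, hw⟩ := hst
  cases hw.symm.trans hop
  exact ⟨v, hmem⟩

theorem HoldsPending.exists_isStoreTo (h : T.HoldsPending i l) (hx : T.Pending i x) :
    ∃ a, isStoreTo a x := by
  obtain ⟨q, hq, -⟩ := h
  obtain ⟨e, -, hop⟩ := hq.exists_mem hx
  exact ⟨e.1, e.2, hop⟩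

theorem HoldsPending.not_pending_of_nil (h : T.HoldsPending i []) : ¬ T.Pending i x := by
  obtain ⟨q, hq, hnil⟩ := h
  obtain rfl := List.map_eq_nil_iff.1 hnil
  exact fun hx => List.not_mem_nil ((hq.mem_iff x).2 hx)

theorem HoldsPending.not_isStoreTo (h : T.HoldsPending i l) (ha : ¬ hasAddr l a)
    (hx : T.Pending i x) : ¬ isStoreTo a x := by
  obtain ⟨q, hq, rfl⟩ := h
  intro hst
  obtain ⟨v, hmem⟩ := hq.exists_mem_of_isStoreTo hx hst
  exact ha (hasAddr_of_mem hmem)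

theorem HoldsPending.not_invalidates (h : T.HoldsPending i l) (ha : ¬ hasAddr l a)
    (hx : T.Pending i x) : ¬ Invalidates a x := by
  rintro (hst | hord)
  · exact h.not_isStoreTo ha hx hst
  · obtain ⟨b, w, hop⟩ := h.exists_isStoreTo hx
    rw [hop] at hord
    exact hord

theorem HoldsPending.exists_newest (h : T.HoldsPending i (l₁ ++ (a, v) :: l₂))
    (ha : ¬ hasAddr l₁ a) : ∃ S, T.Pending i S ∧ S.op = IOp.st a v ∧
      ∀ S', T.Pending i S' → isStoreTo a S' → S' = S ∨ po S' S := by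
  obtain ⟨q, hq, hmap⟩ := h
  obtain ⟨q₁, S, q₂, rfl, rfl, -⟩ := map_fst_eq_append_cons_iff.1 hmap
  have hS : ((a, v), S) ∈ q₁ ++ ((a, v), S) :: q₂ := by simp
  refine ⟨S, hq.pending hS, hq.op_eq _ hS, fun S' hS' hst => ?_⟩
  obtain ⟨w, hmem⟩ := hq.exists_mem_of_isStoreTo hS' hst
  rcases List.mem_append.1 hmem with hmem | hmem
  · exact absurd (hasAddr_of_mem hmem) ha
  · refine (List.mem_cons.1 hmem).imp (congrArg Prod.snd) fun hmem => ?_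
    exact List.rel_of_pairwise_cons (List.pairwise_append.1 hq.newest_first).2.1 hmem

theorem pending_place_iff_of_ne (hyx : y ≠ x) : (T.place x t).Pending i y ↔ T.Pending i y := by
  refine ⟨fun h => ⟨mem_of_mem_place_of_ne h.mem hyx, h.proc_eq, ?_⟩,
    fun h => ⟨mem_place_of_mem h.mem, h.proc_eq, ?_⟩⟩
  · exact (time_place_of_ne hyx).symm.trans h.time_eq
  · exact (time_place_of_ne hyx).trans h.time_eq

theorem not_pending_place_self (ht : t < ⊤) : ¬ (T.place x t).Pending i x :=
  fun h => ht.ne (time_place_self.symm.trans h.time_eq)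

theorem HoldsPending.place (h : T.HoldsPending i l) (hx : x.proc = i → x ∉ T.instrs ∧ t < ⊤) :
    (T.place x t).HoldsPending i l := by
  obtain ⟨q, hq, hmap⟩ := h
  refine ⟨q, ⟨hq.op_eq, fun y => (hq.mem_iff y).trans ?_, hq.newest_first⟩, hmap⟩
  by_cases hyx : y = x
  · subst hyx
    exact iff_of_false (fun h => (hx h.proc_eq).1 h.mem)
      fun h => not_pending_place_self (hx h.proc_eq).2 h
  · exact (pending_place_iff_of_ne hyx).symm

theorem HoldsPending.place_store (h : T.HoldsPending i l) (hop : x.op = IOp.st a v)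
    (hproc : x.proc = i) (hpo : ∀ y ∈ T.instrs, y.proc = i → po y x) :
    (T.place x ⊤).HoldsPending i ((a, v) :: l) := by
  obtain ⟨q, hq, rfl⟩ := h
  refine ⟨((a, v), x) :: q, ⟨List.forall_mem_cons.2 ⟨hop, hq.op_eq⟩, fun y => ?_,
    List.pairwise_cons.2 ⟨fun p hp => ?_, hq.newest_first⟩⟩, rfl⟩
  · rw [List.map_cons, List.mem_cons, hq.mem_iff]
    by_cases hyx : y = x
    · subst hyx
      exact iff_of_true (Or.inl rfl) ⟨Or.inl rfl, hproc, time_place_self⟩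
    · rw [pending_place_iff_of_ne hyx, or_iff_right hyx]
  · have hpending := hq.pending hp
    exact hpo p.2 hpending.mem hpending.proc_eq

theorem IsPendingBuffer.place_dequeued {q₁ q₂ : List ((ℕ × ℕ) × Instr)}
    (h : T.IsPendingBuffer i (q₁ ++ (e, S) :: q₂)) (ht : t < ⊤) :
    (T.place S t).IsPendingBuffer i (q₁ ++ q₂) := by
  have hsub : (q₁ ++ q₂).Sublist (q₁ ++ (e, S) :: q₂) :=
    (List.sublist_cons_self _ _).append_left q₁
  obtain ⟨-, holder, hnewer⟩ := List.pairwise_append.1 h.newest_first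
  have hne : ∀ p ∈ q₁ ++ q₂, p.2 ≠ S := fun p hp => (List.mem_append.1 hp).elim
    (fun hp => (ne_of_po (hnewer p hp _ List.mem_cons_self)).symm)
    fun hp => ne_of_po (List.rel_of_pairwise_cons holder hp)
  refine ⟨fun p hp => h.op_eq p (hsub.subset hp), fun y => ?_, h.newest_first.sublist hsub⟩
  by_cases hyS : y = S
  · subst hyS
    refine iff_of_false (fun hy => ?_) (not_pending_place_self ht)
    obtain ⟨p, hp, heq⟩ := List.mem_map.1 hy
    exact hne p hp heq
  · rw [pending_place_iff_of_ne hyS, ← h.mem_iff]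
    simp only [List.map_append, List.map_cons, List.mem_append, List.mem_cons, hyS, false_or]

theorem HoldsPending.exists_oldest (h : T.HoldsPending i (l₁ ++ (a, v) :: l₂))
    (ha : ¬ hasAddr l₂ a) : ∃ S, T.Pending i S ∧ S.op = IOp.st a v ∧
      (∀ S', T.Pending i S' → isStoreTo a S' → ¬ po S' S) ∧
      ∀ t < ⊤, (T.place S t).HoldsPending i (l₁ ++ l₂) := by
  obtain ⟨q, hq, hmap⟩ := h
  obtain ⟨q₁, S, q₂, rfl, rfl, rfl⟩ := map_fst_eq_append_cons_iff.1 hmap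
  have hS : ((a, v), S) ∈ q₁ ++ ((a, v), S) :: q₂ := by simp
  refine ⟨S, hq.pending hS, hq.op_eq _ hS, fun S' hS' hst hpo => ?_, fun t ht =>
    ⟨q₁ ++ q₂, hq.place_dequeued ht, List.map_append⟩⟩
  obtain ⟨w, hmem⟩ := hq.exists_mem_of_isStoreTo hS' hst
  rcases List.mem_append.1 hmem with hmem | hmem
  · exact lt_asymm hpo.2
      ((List.pairwise_append.1 hq.newest_first).2.2 _ hmem _ List.mem_cons_self).2
  · rcases List.mem_cons.1 hmem with heq | hmem
    · exact ne_of_po hpo (congrArg Prod.snd heq)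
    · exact ha (hasAddr_of_mem hmem)

theorem IsStale.place (h : T.IsStale i e O) (hx : T.Unperformed x)
    (hst : isStoreTo e.1 x → T.time O ≤ t)
    (hinv : x.proc = i → Invalidates e.1 x → t < T.time O) : (T.place x t).IsStale i e O := by
  have htime : (T.place x t).time O = T.time O := time_place_of_ne (hx.ne h.mem h.time_lt_top)
  obtain ⟨S, hS⟩ := h.exists_source
  refine ⟨mem_place_of_mem h.mem, htime.trans_lt h.time_lt_top, ⟨S, ?_⟩, fun y hy hproc hyinv => ?_⟩
  · rw [htime]
    exact hS.place hx hst
  · rw [htime]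
    by_cases hyx : y = x
    · subst hyx
      rw [time_place_self]
      exact hinv hproc hyinv
    · rw [time_place_of_ne hyx]
      exact h.time_lt y (mem_of_mem_place_of_ne hy hyx) hproc hyinv

theorem IsLatestStoreBefore.isStale_place (h : T.IsLatestStoreBefore ⊤ a v S)
    (hx : T.Unperformed x) (ht : T.IsJustBefore t ⊤) (hproc : x.proc ≠ i)
    (hinv : ∀ y ∈ T.instrs, y.proc = i → Invalidates a y → T.time y < ⊤) :
    (T.place x t).IsStale i (a, v) x := by
  refine ⟨Or.inl rfl, time_place_self.trans_lt ht.lt, ⟨S, ?_⟩, fun y hy hyi hyinv => ?_⟩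
  · rw [time_place_self]
    exact h.place_overwriting hx ht
  · have hyx : y ≠ x := by
      rintro rfl
      exact hproc hyi
    have hymem := mem_of_mem_place_of_ne hy hyx
    rw [time_place_self, time_place_of_ne hyx]
    exact ht.time_lt y hymem (hinv y hymem hyi hyinv)

theorem IsStaleBuffer.time_place (h : T.IsStaleBuffer i q) (hx : T.Unperformed x)
    {p : (ℕ × ℕ) × Instr} (hp : p ∈ q) : (T.place x t).time p.2 = T.time p.2 :=
  time_place_of_ne (hx.ne (h.isStale p hp).mem (h.isStale p hp).time_lt_top)

theorem IsStaleBuffer.place (h : T.IsStaleBuffer i q) (hx : T.Unperformed x)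
    (hst : ∀ a, isStoreTo a x → ∀ y ∈ T.instrs, T.time y < ⊤ → T.time y ≤ t)
    (hinv : x.proc = i → ∀ p ∈ q, Invalidates p.1.1 x → t < T.time p.2) :
    (T.place x t).IsStaleBuffer i q where
  isStale p hp := by
    have hstale := h.isStale p hp
    exact hstale.place hx (fun hpx => hst _ hpx p.2 hstale.mem hstale.time_lt_top)
      fun hproc => hinv hproc p hp
  newest_first := h.newest_first.imp_of_mem fun hp hr hlt => by
    rwa [h.time_place hx hp, h.time_place hx hr]

theorem HoldsStale.sublist (h : T.HoldsStale i l) (hl : l₁.Sublist l) : T.HoldsStale i l₁ := by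
  obtain ⟨q, hq, rfl⟩ := h
  obtain ⟨q', hsub, rfl⟩ := List.sublist_map_iff.1 hl
  exact ⟨q', ⟨fun p hp => hq.isStale p (hsub.subset hp), hq.newest_first.sublist hsub⟩, rfl⟩

theorem HoldsStale.not_invalidates_of_pending (h : T.HoldsStale i l) (hx : T.Pending i x)
    (he : e ∈ l) : ¬ Invalidates e.1 x := by
  obtain ⟨q, hq, rfl⟩ := h
  obtain ⟨p, hp, rfl⟩ := List.mem_map.1 he
  intro hinv
  have hlt := (hq.isStale p hp).time_lt x hx.mem hx.proc_eq hinv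
  exact not_top_lt (hx.time_eq.symm.trans_lt hlt)

theorem HoldsStale.place (h : T.HoldsStale i l) (hx : T.Unperformed x)
    (hst : ∀ a, isStoreTo a x → ∀ y ∈ T.instrs, T.time y < ⊤ → T.time y ≤ t)
    (hinv : x.proc = i → ∀ e ∈ l, ¬ Invalidates e.1 x) : (T.place x t).HoldsStale i l := by
  obtain ⟨q, hq, rfl⟩ := h
  exact ⟨q, hq.place hx hst fun hproc p hp hpinv =>
    absurd hpinv (hinv hproc p.1 (List.mem_map_of_mem hp)), rfl⟩

theorem HoldsStale.exists_isStale_place_load (h : T.HoldsStale i (l₁ ++ (a, v) :: l₂))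
    (ha : ¬ hasAddr l₂ a) (hx : T.Unperformed x) (hop : x.op = IOp.ld a) :
    ∃ O, T.IsStale i (a, v) O ∧ ∀ t, T.IsJustBefore t (T.time O) →
      (T.place x t).HoldsStale i (l₁ ++ (a, v) :: l₂) := by
  obtain ⟨q, hq, hmap⟩ := h
  obtain ⟨q₁, O, q₂, rfl, rfl, rfl⟩ := map_fst_eq_append_cons_iff.1 hmap
  have hO : ((a, v), O) ∈ q₁ ++ ((a, v), O) :: q₂ := by simp
  refine ⟨O, hq.isStale _ hO, fun t ht => ⟨_, hq.place hx (fun b hst => ?_) ?_, hmap⟩⟩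
  · exact absurd hst (not_isStoreTo_of_load hop b)
  · rintro - ⟨⟨b, w⟩, O'⟩ hp hinv
    obtain rfl : a = b := (invalidates_load_iff hop).1 hinv
    rcases List.mem_append.1 hp with hp | hp
    · exact ht.lt.trans ((List.pairwise_append.1 hq.newest_first).2.2 _ hp _ List.mem_cons_self)
    · rcases List.mem_cons.1 hp with heq | hp
      · cases heq
        exact ht.lt
      · exact absurd (hasAddr_of_mem hp) ha

theorem HoldsStale.place_overwriting (h : T.HoldsStale i l) (hx : T.Unperformed x)
    (ht : T.IsJustBefore t ⊤) (hproc : x.proc ≠ i) (he : (T.place x t).IsStale i e x) :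
    (T.place x t).HoldsStale i (e :: l) := by
  obtain ⟨q, hq, rfl⟩ := h
  have hq' := hq.place hx (fun _ _ y hy hlt => (ht.time_lt y hy hlt).le)
    fun hxi => absurd hxi hproc
  refine ⟨(e, x) :: q, ⟨List.forall_mem_cons.2 ⟨he, hq'.isStale⟩,
    List.pairwise_cons.2 ⟨fun p hp => ?_, hq'.newest_first⟩⟩, rfl⟩
  rw [hq.time_place hx hp, time_place_self]
  exact ht.time_lt p.2 (hq.isStale p hp).mem (hq.isStale p hp).time_lt_top

end Timeline

/-! ### Simulation of the abstract machine -/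

/-- The instructions executed when processor `i` has reached index `cnt i`, together with the
initial stores. -/
def executed (prog : ℕ → ℕ → IOp) (m0 cnt : ℕ → ℕ) : Set Instr :=
  {x | (x.proc ≠ 0 ∧ x.idx < cnt x.proc ∧ x.op = prog x.proc x.idx) ∨ ∃ a, x = initInstr m0 a}

/-- The instruction that processor `i` executes next. -/
def nextInstr (prog : ℕ → ℕ → IOp) (cnt : ℕ → ℕ) (i : ℕ) : Instr := ⟨i, cnt i, prog i (cnt i)⟩

/-- The invariant of the machine: the timeline `T` is an axiomatic execution of the instructions
executed so far, and it accounts for the memory and the buffers of the state `s`. -/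
structure Simulates (prog : ℕ → ℕ → IOp) (m0 : ℕ → ℕ) (s : PSt) (T : Timeline) : Prop where
  instrs_eq : T.instrs = executed prog m0 s.cnt
  finite_times : (T.time '' T.instrs).Finite
  instOrder : T.InstOrder
  loads : ∀ L ∈ T.instrs, ∀ a, L.op = IOp.ld a → ∃ S, T.IsReadSource a (s.res L.proc L.idx) S L
  memory : ∀ a, ∃ S, T.IsLatestStoreBefore ⊤ a (s.mem a) S
  storeBuffers : ∀ i, T.HoldsPending i (s.sb i)
  invalidationBuffers : ∀ i, T.HoldsStale i (s.ib i)

section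

variable {prog : ℕ → ℕ → IOp} {m0 cnt : ℕ → ℕ} {i : ℕ} {x y : Instr}

theorem not_hasAddr_remAddr (l : Buf) (a : ℕ) : ¬ hasAddr (remAddr l a) a := by
  simp [hasAddr, remAddr]

theorem remAddr_sublist (l : Buf) (a : ℕ) : (remAddr l a).Sublist l := List.filter_sublist

theorem ne_of_mem_remAddr {l : Buf} {a : ℕ} {e : ℕ × ℕ} (he : e ∈ remAddr l a) : e.1 ≠ a := by
  rintro rfl
  exact not_hasAddr_remAddr l e.1 (List.mem_map_of_mem he)

theorem setRes_self (res : ℕ → ℕ → ℕ) (i k : ℕ) : setRes res i k (res i k) = res := by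
  funext j m
  unfold setRes
  split_ifs with h
  · rw [h.1, h.2]
  · rfl

theorem executed_ext (hx : x ∈ executed prog m0 cnt) (hy : y ∈ executed prog m0 cnt)
    (hproc : x.proc = y.proc) (hidx : x.idx = y.idx) : x = y := by
  rcases hx with ⟨hx0, -, hxop⟩ | ⟨b, rfl⟩ <;> rcases hy with ⟨hy0, -, hyop⟩ | ⟨c, rfl⟩
  · cases x
    cases y
    simp_all
  · exact absurd hproc hx0
  · exact absurd hproc.symm hy0
  · exact congrArg (initInstr m0) hidx

theorem executed_update (hi : i ≠ 0) : executed prog m0 (Function.update cnt i (cnt i + 1)) =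
    insert (nextInstr prog cnt i) (executed prog m0 cnt) := by
  ext ⟨p, k, o⟩
  by_cases hp : p = i
  · subst hp
    simp only [executed, nextInstr, Set.mem_ofPred_eq, Set.mem_insert_iff, Function.update_self,
      Instr.mk.injEq, true_and, Nat.lt_succ_iff_lt_or_eq]
    grind
  · simp [executed, nextInstr, hp]

theorem executed_update_zero (n : ℕ) :
    executed prog m0 (Function.update cnt 0 n) = executed prog m0 cnt := by
  ext x
  refine or_congr_left (and_congr_right fun hx => ?_)
  rw [Function.update_of_ne hx]

theorem po_nextInstr (hi : i ≠ 0) (hy : y ∈ executed prog m0 cnt) (hproc : y.proc = i) :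
    po y (nextInstr prog cnt i) := by
  subst hproc
  rcases hy with ⟨-, hlt, -⟩ | ⟨b, rfl⟩
  · exact ⟨rfl, hlt⟩
  · exact absurd rfl hi

end

namespace Simulates

open Timeline

variable {prog : ℕ → ℕ → IOp} {m0 : ℕ → ℕ} {s : PSt} {T : Timeline} {t : ℝ≥0∞}
  {i a v : ℕ} {l l₁ l₂ : Buf}

theorem init (prog : ℕ → ℕ → IOp) (m0 : ℕ → ℕ) :
    Simulates prog m0 (PInit m0) ⟨Set.range (initInstr m0), fun _ => 0⟩ where
  instrs_eq := by
    ext x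
    simp [executed, PInit, eq_comm]
  finite_times := (Set.finite_singleton 0).subset (Set.image_subset_iff.2 fun _ _ => rfl)
  instOrder x _ y _ hpo _ := mo_of_po hpo le_rfl
  loads := by
    rintro _ ⟨b, rfl⟩ a hop
    cases hop
  memory a := by
    refine ⟨initInstr m0 a, ⟨a, rfl⟩, rfl, ENNReal.zero_lt_top, ?_⟩
    rintro _ ⟨b, rfl⟩ ⟨w, hw⟩ -
    cases hw
    exact Or.inl rfl
  storeBuffers i := by
    refine ⟨[], ⟨by simp, fun x => iff_of_false List.not_mem_nil fun hx => ?_, .nil⟩, rfl⟩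
    exact ENNReal.zero_ne_top hx.time_eq
  invalidationBuffers i := ⟨[], ⟨by simp, .nil⟩, rfl⟩

theorem po_next (h : Simulates prog m0 s T) (hi : i ≠ 0) {y : Instr} (hy : y ∈ T.instrs)
    (hproc : y.proc = i) : po y (nextInstr prog s.cnt i) :=
  po_nextInstr hi (h.instrs_eq ▸ hy) hproc

theorem isNext (h : Simulates prog m0 s T) (hi : i ≠ 0) :
    T.IsNext (nextInstr prog s.cnt i) where
  notMem hmem := not_po_self _ (h.po_next hi hmem rfl)
  not_po _ hy hpo := lt_asymm hpo.2 (h.po_next hi hy hpo.1.symm).2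

theorem time_load_lt_top (h : Simulates prog m0 s T) {L : Instr} (hL : L ∈ T.instrs)
    (hop : L.op = IOp.ld a) : T.time L < ⊤ := by
  refine Ne.lt_top fun htop => ?_
  obtain ⟨b, w, hw⟩ := (h.storeBuffers L.proc).exists_isStoreTo ⟨hL, rfl, htop⟩
  cases hw.symm.trans hop

theorem place_next (h : Simulates prog m0 s T) (hi : i ≠ 0)
    (hst : ∀ a, isStoreTo a (nextInstr prog s.cnt i) → t = ⊤)
    (hord : ∀ y ∈ T.instrs, po y (nextInstr prog s.cnt i) →
      ordTable y.op (prog i (s.cnt i)) → T.time y ≤ t)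
    (hread : ∀ a, prog i (s.cnt i) = IOp.ld a →
      ∃ S, (T.place (nextInstr prog s.cnt i) t).IsReadSource a v S (nextInstr prog s.cnt i))
    (hsb : (T.place (nextInstr prog s.cnt i) t).HoldsPending i l₁)
    (hib : (T.place (nextInstr prog s.cnt i) t).HoldsStale i l₂) :
    Simulates prog m0
      { s with sb := Function.update s.sb i l₁, ib := Function.update s.ib i l₂,
               cnt := Function.update s.cnt i (s.cnt i + 1), res := setRes s.res i (s.cnt i) v }
      (T.place (nextInstr prog s.cnt i) t) where
  instrs_eq := by
    rw [executed_update hi, ← h.instrs_eq]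
    rfl
  finite_times := finite_times_place h.finite_times _ _
  instOrder := h.instOrder.place_next (h.isNext hi) hord
  loads L hL a hop := by
    change ∃ S, Timeline.IsReadSource _ a (setRes s.res i (s.cnt i) v L.proc L.idx) S L
    by_cases hLx : L = nextInstr prog s.cnt i
    · subst hLx
      have hres : setRes s.res i (s.cnt i) v i (s.cnt i) = v := if_pos ⟨rfl, rfl⟩
      exact (hread a hop).imp fun S hS => hres.symm ▸ hS
    · have hLmem := mem_of_mem_place_of_ne hL hLx
      have hres : setRes s.res i (s.cnt i) v L.proc L.idx = s.res L.proc L.idx :=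
        if_neg fun heq => (h.po_next hi hLmem heq.1).2.ne heq.2
      rw [hres]
      obtain ⟨S, hS⟩ := h.loads L hLmem a hop
      refine ⟨S, hS.place_next hLmem (h.isNext hi) fun hx => ?_⟩
      exact (hst a hx).symm ▸ h.time_load_lt_top hLmem hop
  memory a := by
    obtain ⟨S, hS⟩ := h.memory a
    exact ⟨S, hS.place (h.isNext hi).unperformed fun hx => (hst a hx).ge⟩
  storeBuffers := (Function.forall_update_iff _ _).2
    ⟨hsb, fun j hj => (h.storeBuffers j).place fun hij => absurd hij.symm hj⟩
  invalidationBuffers := (Function.forall_update_iff _ _).2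
    ⟨hib, fun j hj => (h.invalidationBuffers j).place (h.isNext hi).unperformed
      (fun a hx _ _ _ => (hst a hx).symm ▸ le_top) fun hij => absurd hij.symm hj⟩

theorem place_next_before_top (h : Simulates prog m0 s T) (hi : i ≠ 0)
    (hst : ∀ a, ¬ isStoreTo a (nextInstr prog s.cnt i)) (ht : T.IsJustBefore t ⊤)
    (hpending : ∀ y, T.Pending i y → ¬ ordTable y.op (prog i (s.cnt i)))
    (hread : ∀ a, prog i (s.cnt i) = IOp.ld a →
      ∃ S, (T.place (nextInstr prog s.cnt i) t).IsReadSource a v S (nextInstr prog s.cnt i))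
    (hl : l.Sublist (s.ib i)) (hinv : ∀ e ∈ l, ¬ Invalidates e.1 (nextInstr prog s.cnt i)) :
    Simulates prog m0
      { s with ib := Function.update s.ib i l, cnt := Function.update s.cnt i (s.cnt i + 1),
               res := setRes s.res i (s.cnt i) v }
      (T.place (nextInstr prog s.cnt i) t) := by
  have hord : ∀ y ∈ T.instrs, po y (nextInstr prog s.cnt i) →
      ordTable y.op (prog i (s.cnt i)) → T.time y ≤ t := fun y hy hpo hord =>
    (ht.time_lt y hy (Ne.lt_top fun htop => hpending y ⟨hy, hpo.1, htop⟩ hord)).le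
  have hsb := (h.storeBuffers i).place (x := nextInstr prog s.cnt i) (t := t)
    fun _ => ⟨(h.isNext hi).notMem, ht.lt⟩
  have hib := ((h.invalidationBuffers i).sublist hl).place (t := t) (h.isNext hi).unperformed
    (fun a hx => absurd hx (hst a)) fun _ => hinv
  simpa only [Function.update_eq_self] using
    h.place_next hi (fun a hx => absurd hx (hst a)) hord hread hsb hib

theorem exists_after_non_access (h : Simulates prog m0 s T) (hi : i ≠ 0)
    (hst : ∀ a, ¬ isStoreTo a (nextInstr prog s.cnt i))
    (hld : ∀ a, prog i (s.cnt i) ≠ IOp.ld a)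
    (hpending : ∀ y, T.Pending i y → ¬ ordTable y.op (prog i (s.cnt i)))
    (hl : l.Sublist (s.ib i)) (hinv : ∀ e ∈ l, ¬ ordTable (prog i (s.cnt i)) (IOp.ld e.1)) :
    ∃ T', Simulates prog m0
      { s with ib := Function.update s.ib i l, cnt := Function.update s.cnt i (s.cnt i + 1) }
      T' := by
  obtain ⟨t, ht⟩ := exists_isJustBefore h.finite_times ENNReal.zero_lt_top
  have h' := h.place_next_before_top (v := s.res i (s.cnt i)) hi hst ht hpending
    (fun a ha => absurd ha (hld a)) hl fun e he => not_or.2 ⟨hst e.1, hinv e he⟩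
  rw [setRes_self] at h'
  exact ⟨_, h'⟩

theorem not_ordTable_of_pending (h : Simulates prog m0 s T) {y : Instr} (hy : T.Pending i y)
    {o : IOp} (hst : ∀ a v, o ≠ IOp.st a v) (hcommit : o ≠ IOp.commit) : ¬ ordTable y.op o := by
  obtain ⟨b, w, hop⟩ := (h.storeBuffers i).exists_isStoreTo hy
  rw [hop]
  cases o <;> simp_all [ordTable]

theorem exists_after_nm (h : Simulates prog m0 s T) (hop : prog i (s.cnt i) = IOp.nm) :
    ∃ T', Simulates prog m0 { s with cnt := Function.update s.cnt i (s.cnt i + 1) } T' := by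
  by_cases hi : i = 0
  · subst hi
    -- Processor 0 only carries the initial stores, so its steps are not recorded in `executed`.
    exact ⟨T, { h with instrs_eq := h.instrs_eq.trans (executed_update_zero _).symm }⟩
  · simpa only [Function.update_eq_self] using h.exists_after_non_access hi (l := s.ib i)
      (by simp [isStoreTo, nextInstr, hop]) (by simp [hop])
      (fun y hy => h.not_ordTable_of_pending hy (by simp [hop]) (by simp [hop]))
      (List.Sublist.refl _) (by simp [hop, ordTable])

theorem exists_after_commit (h : Simulates prog m0 s T) (hi : i ≠ 0)
    (hop : prog i (s.cnt i) = IOp.commit)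
    (hsb : s.sb i = []) :
    ∃ T', Simulates prog m0 { s with cnt := Function.update s.cnt i (s.cnt i + 1) } T' := by
  simpa only [Function.update_eq_self] using h.exists_after_non_access hi (l := s.ib i)
    (by simp [isStoreTo, nextInstr, hop]) (by simp [hop])
    (fun y hy => absurd hy (hsb ▸ h.storeBuffers i).not_pending_of_nil)
    (List.Sublist.refl _) (by simp [hop, ordTable])

theorem exists_after_reconcile (h : Simulates prog m0 s T) (hi : i ≠ 0)
    (hop : prog i (s.cnt i) = IOp.reconcile) :
    ∃ T', Simulates prog m0
      { s with ib := Function.update s.ib i [], cnt := Function.update s.cnt i (s.cnt i + 1) }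
      T' :=
  h.exists_after_non_access hi (by simp [isStoreTo, nextInstr, hop]) (by simp [hop])
    (fun y hy => h.not_ordTable_of_pending hy (by simp [hop]) (by simp [hop]))
    (List.nil_sublist _) (by simp)

theorem exists_after_store (h : Simulates prog m0 s T) (hi : i ≠ 0)
    (hop : prog i (s.cnt i) = IOp.st a v) :
    ∃ T', Simulates prog m0
      { s with sb := Function.update s.sb i ((a, v) :: s.sb i),
               ib := Function.update s.ib i (remAddr (s.ib i) a),
               cnt := Function.update s.cnt i (s.cnt i + 1) } T' := by
  have hsb := (h.storeBuffers i).place_store (x := nextInstr prog s.cnt i) hop rfl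
    fun y hy hproc => h.po_next hi hy hproc
  have hinv : ∀ e ∈ remAddr (s.ib i) a, ¬ Invalidates e.1 (nextInstr prog s.cnt i) := by
    intro e he
    simpa [Invalidates, isStoreTo, nextInstr, hop, ordTable] using (ne_of_mem_remAddr he).symm
  have hib := ((h.invalidationBuffers i).sublist (remAddr_sublist _ a)).place (t := ⊤)
    (h.isNext hi).unperformed (fun _ _ _ _ _ => le_top) fun _ => hinv
  have h' := h.place_next (v := s.res i (s.cnt i)) hi (fun _ _ => rfl)
    (fun _ _ _ _ => le_top) (by simp [hop]) hsb hib
  rw [setRes_self] at h'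
  exact ⟨_, h'⟩

theorem place_load_before_top (h : Simulates prog m0 s T) (hi : i ≠ 0)
    (hop : prog i (s.cnt i) = IOp.ld a) (ht : T.IsJustBefore t ⊤) {S : Instr}
    (hread : (T.place (nextInstr prog s.cnt i) t).IsReadSource a v S (nextInstr prog s.cnt i))
    (hl : l.Sublist (s.ib i)) (hne : ∀ e ∈ l, e.1 ≠ a) :
    Simulates prog m0
      { s with ib := Function.update s.ib i l, cnt := Function.update s.cnt i (s.cnt i + 1),
               res := setRes s.res i (s.cnt i) v }
      (T.place (nextInstr prog s.cnt i) t) := by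
  refine h.place_next_before_top hi (not_isStoreTo_of_load hop) ht
    (fun y hy => h.not_ordTable_of_pending hy (by simp [hop]) (by simp [hop])) (fun b hb => ?_) hl
    fun e he hinv => hne e he ((invalidates_load_iff hop).1 hinv).symm
  cases hop.symm.trans hb
  exact ⟨S, hread⟩

theorem exists_after_ldSb (h : Simulates prog m0 s T) (hi : i ≠ 0)
    (hop : prog i (s.cnt i) = IOp.ld a)
    (hsb : s.sb i = l₁ ++ (a, v) :: l₂) (hnewest : ¬ hasAddr l₁ a) :
    ∃ T', Simulates prog m0
      { s with res := setRes s.res i (s.cnt i) v,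
               cnt := Function.update s.cnt i (s.cnt i + 1) } T' := by
  obtain ⟨S, hS, hSop, hSnewest⟩ := (hsb ▸ h.storeBuffers i).exists_newest hnewest
  obtain ⟨t, ht⟩ := exists_isJustBefore h.finite_times ENNReal.zero_lt_top
  have hread : (T.place (nextInstr prog s.cnt i) t).IsReadSource a v S (nextInstr prog s.cnt i) :=
    isReadSource_place_of_buffered (h.isNext hi) (not_isStoreTo_of_load hop a) ht.lt hS.mem hSop
      hS.time_eq (h.po_next hi hS.mem hS.proc_eq) fun S' hS' hst hpo htop =>
        hSnewest S' ⟨hS', hpo.1, htop⟩ hst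
  have hne : ∀ e ∈ s.ib i, e.1 ≠ a := fun e he heq =>
    (h.invalidationBuffers i).not_invalidates_of_pending hS he (Or.inl (heq ▸ ⟨v, hSop⟩))
  have h' := h.place_load_before_top hi hop ht hread (List.Sublist.refl _) hne
  rw [Function.update_eq_self] at h'
  exact ⟨_, h'⟩

theorem exists_after_ldMem (h : Simulates prog m0 s T) (hi : i ≠ 0)
    (hop : prog i (s.cnt i) = IOp.ld a)
    (hn : ¬ hasAddr (s.sb i) a) :
    ∃ T', Simulates prog m0
      { s with res := setRes s.res i (s.cnt i) (s.mem a),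
               ib := Function.update s.ib i (remAddr (s.ib i) a),
               cnt := Function.update s.cnt i (s.cnt i + 1) } T' := by
  obtain ⟨S, hS⟩ := h.memory a
  obtain ⟨t, ht⟩ := exists_isJustBefore h.finite_times ENNReal.zero_lt_top
  have hread := hS.isReadSource_place (h.isNext hi) (not_isStoreTo_of_load hop a) ht
    fun S' hS' hst hpo => Ne.lt_top fun htop =>
      (h.storeBuffers i).not_isStoreTo hn ⟨hS', hpo.1, htop⟩ hst
  exact ⟨_, h.place_load_before_top hi hop ht hread (remAddr_sublist _ a)
    fun e he => ne_of_mem_remAddr he⟩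

theorem exists_after_ldIb (h : Simulates prog m0 s T) (hi : i ≠ 0)
    (hop : prog i (s.cnt i) = IOp.ld a)
    (hib : s.ib i = l₁ ++ (a, v) :: l₂) :
    ∃ T', Simulates prog m0
      { s with res := setRes s.res i (s.cnt i) v,
               ib := Function.update s.ib i (l₁ ++ (a, v) :: remAddr l₂ a),
               cnt := Function.update s.cnt i (s.cnt i + 1) } T' := by
  have hsub : (l₁ ++ (a, v) :: remAddr l₂ a).Sublist (s.ib i) :=
    hib ▸ ((remAddr_sublist l₂ a).cons_cons _).append_left l₁
  obtain ⟨O, hO, hstale⟩ := ((h.invalidationBuffers i).sublist hsub).exists_isStale_place_load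
    (not_hasAddr_remAddr l₂ a) (h.isNext hi).unperformed hop
  obtain ⟨S, hS⟩ := hO.exists_source
  obtain ⟨t, ht⟩ := exists_isJustBefore h.finite_times (zero_le.trans_lt hS.time_lt)
  have hord : ∀ y ∈ T.instrs, po y (nextInstr prog s.cnt i) →
      ordTable y.op (prog i (s.cnt i)) → T.time y ≤ t := fun y hy hpo hord =>
    (ht.time_lt y hy (hO.time_lt y hy hpo.1 (Or.inr (hop ▸ hord)))).le
  have hread : ∀ b, prog i (s.cnt i) = IOp.ld b →
      ∃ S, (T.place (nextInstr prog s.cnt i) t).IsReadSource b v S (nextInstr prog s.cnt i) := by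
    intro b hb
    cases hop.symm.trans hb
    exact ⟨S, hS.isReadSource_place (h.isNext hi) (not_isStoreTo_of_load hop a) ht
      fun S' hS' hst hpo => hO.time_lt S' hS' hpo.1 (Or.inl hst)⟩
  have hsb := (h.storeBuffers i).place (x := nextInstr prog s.cnt i) (t := t)
    fun _ => ⟨(h.isNext hi).notMem, ht.lt.trans_le le_top⟩
  have h' := h.place_next hi (fun b hx => absurd hx (not_isStoreTo_of_load hop b)) hord hread hsb
    (hstale t ht)
  rw [Function.update_eq_self] at h'
  exact ⟨_, h'⟩

theorem place_dequeued (h : Simulates prog m0 s T) {S : Instr} (hS : T.Pending i S)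
    (hdeq : T.IsDequeuable S) (hop : S.op = IOp.st a v) (ht : T.IsJustBefore t ⊤)
    (hsb : (T.place S t).HoldsPending i l) :
    Simulates prog m0
      { s with mem := Function.update s.mem a v,
               sb := Function.update s.sb i l,
               ib := fun j => if j = i ∨ hasAddr (s.sb j) a then s.ib j
                              else (a, s.mem a) :: s.ib j }
      (T.place S t) where
  instrs_eq := (Set.insert_eq_of_mem hS.mem).trans h.instrs_eq
  finite_times := finite_times_place h.finite_times _ _
  instOrder := h.instOrder.place_dequeued hdeq ht
  loads L hL b hLop := by
    have hLmem : L ∈ T.instrs := (Set.insert_eq_of_mem hS.mem) ▸ hL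
    obtain ⟨R, hR⟩ := h.loads L hLmem b hLop
    exact ⟨R, hR.place_dequeued hLmem (h.time_load_lt_top hLmem hLop) hdeq ht⟩
  memory := (Function.forall_update_iff _
      fun b w => ∃ R, (T.place S t).IsLatestStoreBefore ⊤ b w R).2
    ⟨⟨S, ht.isLatestStoreBefore_place hop⟩, fun b hb => by
      obtain ⟨R, hR⟩ := h.memory b
      refine ⟨R, hR.place hdeq.unperformed fun ⟨w, hw⟩ => ?_⟩
      cases hop.symm.trans hw
      exact absurd rfl hb⟩
  storeBuffers := (Function.forall_update_iff _ _).2 ⟨hsb, fun j hj =>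
    (h.storeBuffers j).place fun hproc => absurd (hproc.symm.trans hS.proc_eq) hj⟩
  invalidationBuffers j := by
    dsimp only
    split_ifs with hj
    · exact (h.invalidationBuffers j).place hdeq.unperformed
        (fun _ _ y hy hlt => (ht.time_lt y hy hlt).le) fun hproc _ he =>
          (h.invalidationBuffers j).not_invalidates_of_pending ⟨hS.mem, hproc, hS.time_eq⟩ he
    · obtain ⟨hji, hja⟩ := not_or.1 hj
      obtain ⟨R, hR⟩ := h.memory a
      have hproc : S.proc ≠ j := fun hproc => hji (hproc.symm.trans hS.proc_eq)
      refine (h.invalidationBuffers j).place_overwriting hdeq.unperformed ht hproc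
        (hR.isStale_place hdeq.unperformed ht hproc fun y hy hyj hinv => Ne.lt_top fun htop => ?_)
      exact (h.storeBuffers j).not_invalidates hja ⟨hy, hyj, htop⟩ hinv

theorem exists_after_deqSb (h : Simulates prog m0 s T) (hsb : s.sb i = l₁ ++ (a, v) :: l₂)
    (holdest : ¬ hasAddr l₂ a) :
    ∃ T', Simulates prog m0
      { s with mem := Function.update s.mem a v,
               sb := Function.update s.sb i (l₁ ++ l₂),
               ib := fun j => if j = i ∨ hasAddr (s.sb j) a then s.ib j
                              else (a, s.mem a) :: s.ib j } T' := by
  obtain ⟨S, hS, hop, hSoldest, hsb'⟩ := (hsb ▸ h.storeBuffers i).exists_oldest holdest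
  obtain ⟨t, ht⟩ := exists_isJustBefore h.finite_times ENNReal.zero_lt_top
  have hdeq : T.IsDequeuable S := by
    refine ⟨hS.mem, hS.time_eq, fun y hy hpo hord => Ne.lt_top fun htop => ?_⟩
    have hy : T.Pending i y := ⟨hy, hpo.1.trans hS.proc_eq, htop⟩
    obtain ⟨b, w, hyop⟩ := (h.storeBuffers i).exists_isStoreTo hy
    rw [hyop, hop] at hord
    obtain rfl : b = a := hord
    exact hSoldest y hy ⟨w, hyop⟩ hpo
  exact ⟨_, h.place_dequeued hS hdeq hop ht (hsb' t ht.lt)⟩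

theorem exists_after_step (hp0 : ∀ k, prog 0 k = IOp.nm) (h : Simulates prog m0 s T) {s' : PSt}
    (hstep : PStep prog s s') : ∃ T', Simulates prog m0 s' T' := by
  have ne_zero : ∀ {i k o}, prog i k = o → o ≠ IOp.nm → i ≠ 0 := by
    rintro _ k _ rfl hne rfl
    exact hne (hp0 k)
  cases hstep with
  | nm i hop => exact h.exists_after_nm hop
  | store i a v hop => exact h.exists_after_store (ne_zero hop nofun) hop
  | commit i hop hsb => exact h.exists_after_commit (ne_zero hop nofun) hop hsb
  | reconcile i hop => exact h.exists_after_reconcile (ne_zero hop nofun) hop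
  | ldSb i a v l₁ l₂ hop hsb hnewest =>
    exact h.exists_after_ldSb (ne_zero hop nofun) hop hsb hnewest
  | ldMem i a hop hn => exact h.exists_after_ldMem (ne_zero hop nofun) hop hn
  | ldIb i a v l₁ l₂ hop _ hib => exact h.exists_after_ldIb (ne_zero hop nofun) hop hib
  | deqSb i a v l₁ l₂ hsb holdest => exact h.exists_after_deqSb hsb holdest

theorem exists_of_reachable (hp0 : ∀ k, prog 0 k = IOp.nm)
    (h : Relation.ReflTransGen (PStep prog) (PInit m0) s) : ∃ T, Simulates prog m0 s T := by
  induction h with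
  | refl => exact ⟨_, init prog m0⟩
  | tail _ hstep ih =>
    obtain ⟨T, hT⟩ := ih
    exact hT.exists_after_step hp0 hstep

theorem mo_or_mo_of_ne (h : Simulates prog m0 s T) {x y : Instr} (hx : x ∈ T.instrs)
    (hy : y ∈ T.instrs) (hne : x ≠ y) : T.mo x y ∨ T.mo y x :=
  mo_or_mo fun hproc hidx =>
    hne (executed_ext (h.instrs_eq ▸ hx) (h.instrs_eq ▸ hy) hproc hidx)

end Simulates

theorem wmm_i2e_sound_general (prog : ℕ → ℕ → IOp) (m0 : ℕ → ℕ)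
    (hp0 : ∀ k, prog 0 k = IOp.nm)
    (s : PSt) (h : Relation.ReflTransGen (PStep prog) (PInit m0) s) :
    ∃ (I : Set Instr) (mo rf : Instr → Instr → Prop),
      I = { x : Instr | (x.proc ≠ 0 ∧ x.idx < s.cnt x.proc ∧
                          x.op = prog x.proc x.idx) ∨
                        (∃ a, x = initInstr m0 a) } ∧
      (∀ x, ¬ mo x x) ∧
      (∀ x y z, mo x y → mo y z → mo x z) ∧
      (∀ x ∈ I, ∀ y ∈ I, x ≠ y → mo x y ∨ mo y x) ∧
      (∀ x ∈ I, ∀ y ∈ I, po x y → ordTable x.op y.op → mo x y) ∧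
      (∀ S L, rf S L → S ∈ I ∧ L ∈ I) ∧
      (∀ S L a, rf S L → L.op = IOp.ld a →
        isStoreTo a S ∧ (mo S L ∨ po S L) ∧
        ∀ S' ∈ I, isStoreTo a S' → (mo S' L ∨ po S' L) → S' = S ∨ mo S' S) ∧
      (∀ i k a, i ≠ 0 → k < s.cnt i → prog i k = IOp.ld a →
        ∃ S, rf S ⟨i, k, IOp.ld a⟩ ∧ S.op = IOp.st a (s.res i k)) := by
  obtain ⟨T, hT⟩ := Simulates.exists_of_reachable hp0 h
  refine ⟨T.instrs, T.mo,
    fun S L => L ∈ T.instrs ∧ ∃ a, L.op = IOp.ld a ∧ T.IsReadSource a (s.res L.proc L.idx) S L,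
    hT.instrs_eq, T.mo_irrefl, fun _ _ _ => Timeline.mo_trans,
    fun _ hx _ hy => hT.mo_or_mo_of_ne hx hy, hT.instOrder,
    fun S L ⟨hL, _, _, hS⟩ => ⟨hS.mem, hL⟩, ?_, fun i k a hi hk hop => ?_⟩
  · rintro S L a ⟨-, b, hLb, hS⟩ hLa
    cases hLa.symm.trans hLb
    exact ⟨⟨_, hS.op_eq⟩, hS.visible, hS.maximal⟩
  · have hL : ⟨i, k, IOp.ld a⟩ ∈ T.instrs := hT.instrs_eq ▸ Or.inl ⟨hi, hk, hop.symm⟩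
    obtain ⟨S, hS⟩ := hT.loads _ hL a rfl
    exact ⟨S, ⟨hL, a, rfl, hS⟩, hS.op_eq⟩

/-- Soundness of WMM I²E w.r.t. the WMM axiomatic model: for
every finite I²E execution ending with all store buffers empty, there exist a
memory order `mo` and reads-from `rf` over the executed instructions (together
with the initialization stores) such that `mo` is strict and total, the
Inst-Order and Ld-Val axioms hold, and every executed load reads from a store
holding exactly the value the machine returned for it. -/
theorem wmm_i2e_sound (prog : ℕ → ℕ → IOp) (m0 : ℕ → ℕ)
    (hp0 : ∀ k, prog 0 k = IOp.nm)  -- processor 0 is reserved for init stores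
    (s : PSt) (h : Relation.ReflTransGen (PStep prog) (PInit m0) s)
    (hemp : ∀ i, s.sb i = []) :
    ∃ (I : Set Instr) (mo rf : Instr → Instr → Prop),
      I = { x : Instr | (x.proc ≠ 0 ∧ x.idx < s.cnt x.proc ∧
                          x.op = prog x.proc x.idx) ∨
                        (∃ a, x = initInstr m0 a) } ∧
      (∀ x, ¬ mo x x) ∧
      (∀ x y z, mo x y → mo y z → mo x z) ∧
      (∀ x ∈ I, ∀ y ∈ I, x ≠ y → mo x y ∨ mo y x) ∧
      -- Axiom Inst-Order:
      (∀ x ∈ I, ∀ y ∈ I, po x y → ordTable x.op y.op → mo x y) ∧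
      (∀ S L, rf S L → S ∈ I ∧ L ∈ I) ∧
      -- Axiom Ld-Val:
      (∀ S L a, rf S L → L.op = IOp.ld a →
        isStoreTo a S ∧ (mo S L ∨ po S L) ∧
        ∀ S' ∈ I, isStoreTo a S' → (mo S' L ∨ po S' L) → S' = S ∨ mo S' S) ∧
      -- every executed load returns the same value in both models:
      (∀ i k a, i ≠ 0 → k < s.cnt i → prog i k = IOp.ld a →
        ∃ S, rf S ⟨i, k, IOp.ld a⟩ ∧ S.op = IOp.st a (s.res i k)) :=
  wmm_i2e_sound_general prog m0 hp0 s h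
end
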